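/- arXiv:2510.10093 — 2 statements merged into one kernel-verified Lean document; each statement's English description precedes it below -/
import Mathlib

section
/- Let x>0, let r ∈ ℕ (r ≥ 1), let s,t ∈ ℂ with Re(t) > max{0, 1−r, 1−Re(s), 2−r−Re(s)}, and let M ∈ ℕ∪{0} with M ≥ r−1. Then (1/Γ(t)) ∫₀^∞ y^{t−1} Li_s(e^{−xy}) ( Li_r(e^{−y}) − (−1)^{r−1}(H_{r−1} − log y) y^{r−1}/(r−1)! − ∑_{k=0, k≠r−1}^{M} (−1)^k ζ(r−k) y^k/k! ) dy = Θ(r,s,t,x) − ∑_{k=0, k≠r−1}^{M} ((−1)^k/k!) ζ(r−k) Γ(t+k) ζ(t+k+s)/(x^{t+k} Γ(t)) + ((−1)^r Γ(t+r−1)/(x^{t+r−1}(r−1)!Γ(t))) ( ζ(t+s+r−1)(H_{r−1} − ψ(t+r−1) + log x) − ζ'(t+s+r−1) ), where ζ' is the derivative of ζ. -/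
open Complex Filter MeasureTheory Set

/-- Polylogarithm `Li_s(z) = ∑_{u ≥ 1} z^u / u^s` for real `z` and complex order `s`. -/
noncomputable def Li (s : ℂ) (z : ℝ) : ℂ :=
  ∑' u : ℕ, (z : ℂ) ^ (u + 1) / ((u + 1 : ℕ) : ℂ) ^ s

/-- The generalized Mordell–Tornheim zeta function
`Θ(r,s,t,x) = ∑_{n,m ≥ 1} n^{-r} m^{-s} (n + m x)^{-t}`. -/
noncomputable def Theta (r s t : ℂ) (x : ℝ) : ℂ :=
  ∑' n : ℕ, ∑' m : ℕ,
    1 / (((n + 1 : ℕ) : ℂ) ^ r * ((m + 1 : ℕ) : ℂ) ^ s *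
      (((n + 1 : ℕ) : ℂ) + ((m + 1 : ℕ) : ℂ) * (x : ℂ)) ^ t)

/-- The digamma function `ψ = Γ'/Γ` on the complex numbers. -/
noncomputable def cdigamma (z : ℂ) : ℂ := deriv Complex.Gamma z / Complex.Gamma z

theorem exp_neg_le_rpow {b u : ℝ} (hb : 0 < b) (hu : 0 < u) :
    Real.exp (-u) ≤ b ^ b * u ^ (-b) := by
  have h1 : u / b ≤ Real.exp (u / b) := by linarith [Real.add_one_le_exp (u / b)]
  have h2 : (u / b) ^ b ≤ Real.exp u := by
    calc (u / b) ^ b ≤ (Real.exp (u / b)) ^ b := Real.rpow_le_rpow (by positivity) h1 hb.le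
      _ = Real.exp u := by rw [← Real.exp_mul, div_mul_cancel₀ _ hb.ne']
  rw [Real.exp_neg, Real.rpow_neg hu.le, ← div_eq_mul_inv, inv_le_comm₀ (Real.exp_pos u)
    (by positivity), inv_div, ← Real.div_rpow hu.le hb.le]
  exact h2

theorem summable_natCast_succ_rpow_neg {p : ℝ} (hp : 1 < p) :
    Summable fun u : ℕ => ((u + 1 : ℕ) : ℝ) ^ (-p) :=
  (summable_nat_add_iff 1).mpr (Real.summable_nat_rpow.mpr (by linarith))

theorem norm_one_div_natCast_succ_cpow (s : ℂ) (u : ℕ) :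
    ‖1 / ((u + 1 : ℕ) : ℂ) ^ s‖ = ((u + 1 : ℕ) : ℝ) ^ (-s.re) := by
  rw [norm_div, norm_one, Complex.norm_natCast_cpow_of_pos u.succ_pos,
    Real.rpow_neg (by positivity), one_div]

theorem norm_Li_term_le (s : ℂ) {b x y : ℝ} (hb : 0 < b) (hx : 0 < x) (hy : 0 < y) (u : ℕ) :
    ‖1 / ((u + 1 : ℕ) : ℂ) ^ s * (Real.exp (-(((u + 1 : ℕ) : ℝ) * x) * y) : ℂ)‖ ≤
      b ^ b * x ^ (-b) * y ^ (-b) * ((u + 1 : ℕ) : ℝ) ^ (-(s.re + b)) := by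
  have hu : (0 : ℝ) < ((u + 1 : ℕ) : ℝ) := by positivity
  rw [norm_mul, norm_one_div_natCast_succ_cpow, Complex.norm_real, Real.norm_eq_abs,
    Real.abs_exp, neg_mul]
  calc _ ≤ ((u + 1 : ℕ) : ℝ) ^ (-s.re) * (b ^ b * (((u + 1 : ℕ) : ℝ) * x * y) ^ (-b)) := by
        gcongr
        exact exp_neg_le_rpow hb (by positivity)
    _ = _ := by
        rw [Real.mul_rpow (by positivity) hy.le, Real.mul_rpow hu.le hx.le, neg_add,
          Real.rpow_add hu]
        ring

theorem Li_exp_eq_tsum (s : ℂ) (x y : ℝ) :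
    Li s (Real.exp (-(x * y))) =
      ∑' u : ℕ, 1 / ((u + 1 : ℕ) : ℂ) ^ s * (Real.exp (-(((u + 1 : ℕ) : ℝ) * x) * y) : ℂ) := by
  refine tsum_congr fun u => ?_
  rw [← Complex.ofReal_pow, ← Real.exp_nat_mul, div_eq_mul_one_div, mul_comm]
  congr 3
  ring

theorem hasSum_Li_exp (s : ℂ) {x y : ℝ} (hx : 0 < x) (hy : 0 < y) :
    HasSum (fun u : ℕ =>
      1 / ((u + 1 : ℕ) : ℂ) ^ s * (Real.exp (-(((u + 1 : ℕ) : ℝ) * x) * y) : ℂ))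
      (Li s (Real.exp (-(x * y)))) := by
  have hb : 0 < max 0 (1 - s.re) + 1 := by positivity
  rw [Li_exp_eq_tsum]
  refine (Summable.of_norm_bounded ?_ (norm_Li_term_le s hb hx hy)).hasSum
  exact (summable_natCast_succ_rpow_neg (by linarith [le_max_right 0 (1 - s.re)])).mul_left _

theorem norm_Li_exp_le (s : ℂ) {b x : ℝ} (hb : 0 < b) (hsb : 1 - s.re < b) (hx : 0 < x) :
    ∃ C : ℝ, ∀ y : ℝ, 0 < y → ‖Li s (Real.exp (-(x * y)))‖ ≤ C * y ^ (-b) := by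
  have hsum := summable_natCast_succ_rpow_neg (p := s.re + b) (by linarith)
  refine ⟨b ^ b * x ^ (-b) * ∑' u : ℕ, ((u + 1 : ℕ) : ℝ) ^ (-(s.re + b)), fun y hy => ?_⟩
  rw [Li_exp_eq_tsum]
  refine (tsum_of_norm_bounded (hsum.hasSum.mul_left _) (norm_Li_term_le s hb hx hy)).trans_eq ?_
  ring

theorem continuousOn_Li_exp (s : ℂ) {x : ℝ} (hx : 0 < x) :
    ContinuousOn (fun y : ℝ => Li s (Real.exp (-(x * y)))) (Ioi 0) := by
  intro z hz
  have hz : 0 < z := hz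
  refine ContinuousAt.continuousWithinAt ?_
  simp_rw [Li_exp_eq_tsum]
  refine ContinuousOn.continuousAt ?_ (Ioi_mem_nhds (half_lt_self hz))
  refine continuousOn_tsum (fun u => by fun_prop)
    (hasSum_Li_exp s hx (half_pos hz)).summable.norm fun u y hy => ?_
  have hy : z / 2 < y := hy
  rw [norm_mul, norm_mul]
  simp only [Complex.norm_real, Real.norm_eq_abs, Real.abs_exp, neg_mul]
  gcongr

theorem isBigO_rpow_atTop_nhdsGT_zero {f : ℝ → ℂ} {b C : ℝ}
    (hf : ∀ y : ℝ, 0 < y → ‖f y‖ ≤ C * y ^ (-b)) :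
    f =O[atTop] (fun y : ℝ => y ^ (-b)) ∧ f =O[nhdsWithin 0 (Ioi 0)] (fun y : ℝ => y ^ (-b)) := by
  have key : ∀ y : ℝ, 0 < y → ‖f y‖ ≤ C * ‖y ^ (-b)‖ := fun y hy => by
    rw [Real.norm_of_nonneg (by positivity)]
    exact hf y hy
  exact ⟨Asymptotics.IsBigO.of_bound C ((eventually_gt_atTop 0).mono key),
    Asymptotics.IsBigO.of_bound C (eventually_mem_nhdsWithin.mono key)⟩

theorem mellinConvergent_Li_exp_mul_Li_exp (r s : ℂ) {x : ℝ} (hx : 0 < x) {t : ℂ}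
    (hr : 1 ≤ r.re) (ht : 0 < t.re) (hts : 1 < (t + s).re) :
    MellinConvergent (fun y : ℝ => Li s (Real.exp (-(x * y))) * Li r (Real.exp (-(1 * y)))) t := by
  rw [Complex.add_re] at hts
  have hbound : ∀ {b c : ℝ}, 0 < b → 1 - s.re < b → 0 < c → ∃ C : ℝ, ∀ y : ℝ, 0 < y →
      ‖Li s (Real.exp (-(x * y))) * Li r (Real.exp (-(1 * y)))‖ ≤ C * y ^ (-(b + c)) := by
    intro b c hb hsb hc
    obtain ⟨C₁, h₁⟩ := norm_Li_exp_le s hb hsb hx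
    obtain ⟨C₂, h₂⟩ := norm_Li_exp_le r hc (by linarith) one_pos
    refine ⟨C₁ * C₂, fun y hy => ?_⟩
    rw [norm_mul, neg_add, Real.rpow_add hy]
    refine (mul_le_mul (h₁ y hy) (h₂ y hy) (norm_nonneg _)
      ((norm_nonneg _).trans (h₁ y hy))).trans_eq ?_
    ring
  obtain ⟨b, hb₁, hb₂⟩ := exists_between (max_lt ht (by linarith : 1 - s.re < t.re))
  rw [max_lt_iff] at hb₁
  obtain ⟨C, hC⟩ := hbound hb₁.1 hb₁.2 (half_pos (sub_pos.mpr hb₂))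
  obtain ⟨D, hD⟩ := hbound (b := t.re) (by linarith) (by linarith) one_pos
  exact mellinConvergent_of_isBigO_rpow
    (((continuousOn_Li_exp s hx).mul (continuousOn_Li_exp r one_pos)).locallyIntegrableOn
      measurableSet_Ioi)
    (isBigO_rpow_atTop_nhdsGT_zero hD).1 (by linarith)
    (isBigO_rpow_atTop_nhdsGT_zero hC).2 (by linarith)

theorem mellinConvergent_Li_exp (s : ℂ) {x : ℝ} (hx : 0 < x) {t : ℂ}
    (ht : 0 < t.re) (hts : 1 < (t + s).re) :
    MellinConvergent (fun y : ℝ => Li s (Real.exp (-(x * y)))) t ∧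
    MellinConvergent (fun y : ℝ => Real.log y • Li s (Real.exp (-(x * y)))) t ∧
    HasDerivAt (mellin fun y : ℝ => Li s (Real.exp (-(x * y))))
      (mellin (fun y : ℝ => Real.log y • Li s (Real.exp (-(x * y)))) t) t := by
  rw [Complex.add_re] at hts
  obtain ⟨b, hb₁, hb₂⟩ := exists_between (max_lt ht (by linarith : 1 - s.re < t.re))
  rw [max_lt_iff] at hb₁
  obtain ⟨C, hC⟩ := norm_Li_exp_le s hb₁.1 hb₁.2 hx
  obtain ⟨D, hD⟩ := norm_Li_exp_le s (b := t.re + 1) (by linarith) (by linarith) hx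
  have hloc := (continuousOn_Li_exp s hx).locallyIntegrableOn (μ := volume) measurableSet_Ioi
  exact ⟨mellinConvergent_of_isBigO_rpow hloc (isBigO_rpow_atTop_nhdsGT_zero hD).1 (by linarith)
      (isBigO_rpow_atTop_nhdsGT_zero hC).2 hb₂,
    mellin_hasDerivAt_of_isBigO_rpow hloc (isBigO_rpow_atTop_nhdsGT_zero hD).1 (by linarith)
      (isBigO_rpow_atTop_nhdsGT_zero hC).2 hb₂⟩

theorem mellin_Li_exp (s : ℂ) {x : ℝ} (hx : 0 < x) {t : ℂ}
    (ht : 0 < t.re) (hts : 1 < (t + s).re) :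
    mellin (fun y : ℝ => Li s (Real.exp (-(x * y)))) t =
      Complex.Gamma t * riemannZeta (t + s) / (x : ℂ) ^ t := by
  have hsum : Summable fun u : ℕ =>
      ‖1 / ((u + 1 : ℕ) : ℂ) ^ s‖ / (((u + 1 : ℕ) : ℝ) * x) ^ t.re := by
    refine ((summable_natCast_succ_rpow_neg hts).mul_left (x ^ (-t.re))).congr fun u => ?_
    have hu : (0 : ℝ) < ((u + 1 : ℕ) : ℝ) := by positivity
    rw [norm_one_div_natCast_succ_cpow, Real.mul_rpow hu.le hx.le, Complex.add_re, neg_add,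
      Real.rpow_add hu, Real.rpow_neg hx.le, Real.rpow_neg hu.le t.re]
    field_simp
  have h := hasSum_mellin (a := fun u : ℕ => 1 / ((u + 1 : ℕ) : ℂ) ^ s)
    (p := fun u : ℕ => ((u + 1 : ℕ) : ℝ) * x) (fun u => Or.inr (by positivity)) ht
    (fun y hy => hasSum_Li_exp s hx hy) hsum
  rw [← h.tsum_eq, zeta_eq_tsum_one_div_nat_add_one_cpow hts, ← tsum_mul_left, ← tsum_div_const]
  refine tsum_congr fun u => ?_
  have hu : ((u + 1 : ℕ) : ℂ) ≠ 0 := Nat.cast_ne_zero.mpr u.succ_ne_zero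
  rw [Complex.ofReal_mul, Complex.mul_cpow_ofReal_nonneg (by positivity) hx.le,
    Complex.ofReal_natCast, ← Nat.cast_succ, Complex.cpow_add _ _ hu]
  field_simp

theorem mellin_log_smul_Li_exp (s : ℂ) {x : ℝ} (hx : 0 < x) {t : ℂ}
    (ht : 0 < t.re) (hts : 1 < (t + s).re) :
    mellin (fun y : ℝ => Real.log y • Li s (Real.exp (-(x * y)))) t =
      Complex.Gamma t / (x : ℂ) ^ t *
        (riemannZeta (t + s) * (cdigamma t - Real.log x) + deriv riemannZeta (t + s)) := by
  have hx' : (x : ℂ) ≠ 0 := Complex.ofReal_ne_zero.mpr hx.ne'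
  have hΓ := Complex.Gamma_ne_zero_of_re_pos ht
  have hdΓ : HasDerivAt Complex.Gamma (deriv Complex.Gamma t) t := by
    refine (Complex.differentiableAt_Gamma t fun m hm => ?_).hasDerivAt
    rw [hm, Complex.neg_re, Complex.natCast_re] at ht
    linarith [(Nat.cast_nonneg m : (0 : ℝ) ≤ m)]
  have hdζ : HasDerivAt (fun z => riemannZeta (z + s)) (deriv riemannZeta (t + s)) t := by
    refine (differentiableAt_riemannZeta fun h => ?_).hasDerivAt.comp_add_const t s
    rw [h, Complex.one_re] at hts
    exact lt_irrefl _ hts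
  have hdx : HasDerivAt (fun z : ℂ => (x : ℂ) ^ z) ((x : ℂ) ^ t * Complex.log x) t :=
    (hasDerivAt_id t).const_cpow (Or.inl hx') |>.congr_deriv (by simp)
  have hxt : (x : ℂ) ^ t ≠ 0 := by simp [Complex.cpow_eq_zero_iff, hx']
  have hd := (hdΓ.mul hdζ).div hdx hxt
  have heq : mellin (fun y : ℝ => Li s (Real.exp (-(x * y)))) =ᶠ[nhds t]
      fun z => Complex.Gamma z * riemannZeta (z + s) / (x : ℂ) ^ z := by
    have h₁ : ∀ᶠ z : ℂ in nhds t, 0 < z.re :=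
      Complex.continuous_re.continuousAt.eventually (lt_mem_nhds ht)
    have h₂ : ∀ᶠ z : ℂ in nhds t, 1 < (z + s).re :=
      (Complex.continuous_re.comp (continuous_add_const s)).continuousAt.eventually
        (lt_mem_nhds hts)
    filter_upwards [h₁, h₂] with z hz₁ hz₂
    exact mellin_Li_exp s hx hz₁ hz₂
  rw [(mellinConvergent_Li_exp s hx ht hts).2.2.unique (hd.congr_of_eventuallyEq heq),
    ← Complex.ofReal_log hx.le, cdigamma]
  simp only [Pi.mul_apply]
  field_simp
  ring

theorem mellin_Li_exp_mul_Li_exp (r s : ℂ) {x : ℝ} (hx : 0 < x) {t : ℂ}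
    (hr : 1 ≤ r.re) (ht : 0 < t.re) (hts : 1 < (t + s).re) :
    mellin (fun y : ℝ => Li s (Real.exp (-(x * y))) * Li r (Real.exp (-(1 * y)))) t =
      Complex.Gamma t * Theta r s t x := by
  have hts' := hts
  rw [Complex.add_re] at hts'
  obtain ⟨b, hb₁, hb₂⟩ := exists_between (max_lt ht (by linarith : 1 - s.re < t.re))
  rw [max_lt_iff] at hb₁
  have hsum : Summable fun i : ℕ × ℕ =>
      ‖1 / ((i.1 + 1 : ℕ) : ℂ) ^ r * (1 / ((i.2 + 1 : ℕ) : ℂ) ^ s)‖ /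
        (((i.1 + 1 : ℕ) : ℝ) + ((i.2 + 1 : ℕ) : ℝ) * x) ^ t.re := by
    have hn := summable_natCast_succ_rpow_neg (p := r.re + (t.re - b)) (by linarith)
    have hm := summable_natCast_succ_rpow_neg (p := s.re + b) (by linarith)
    refine Summable.of_nonneg_of_le (fun i => by positivity) (fun i => ?_)
      ((hn.mul_of_nonneg hm (fun _ => by positivity) fun _ => by positivity).mul_left (x ^ (-b)))
    have h₁ : (0 : ℝ) < ((i.1 + 1 : ℕ) : ℝ) := by positivity
    have h₂ : (0 : ℝ) < ((i.2 + 1 : ℕ) : ℝ) := by positivity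
    rw [norm_mul, norm_one_div_natCast_succ_cpow, norm_one_div_natCast_succ_cpow]
    generalize ((i.1 + 1 : ℕ) : ℝ) = n at *
    generalize ((i.2 + 1 : ℕ) : ℝ) = m at *
    have hmx : 0 < m * x := by positivity
    have hle : n ^ (t.re - b) * (m * x) ^ b ≤ (n + m * x) ^ t.re := by
      calc _ ≤ (n + m * x) ^ (t.re - b) * (n + m * x) ^ b := by
            gcongr
            · linarith
            · linarith
            · linarith
        _ = _ := by rw [← Real.rpow_add (by positivity), sub_add_cancel]
    calc _ ≤ n ^ (-r.re) * m ^ (-s.re) / (n ^ (t.re - b) * (m * x) ^ b) := by gcongr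
      _ = _ := by
        rw [Real.mul_rpow h₂.le hx.le, neg_add, Real.rpow_add h₁, neg_add, Real.rpow_add h₂,
          Real.rpow_neg h₁.le (t.re - b), Real.rpow_neg h₂.le b, Real.rpow_neg hx.le b]
        field_simp
  have hF : ∀ y ∈ Ioi (0 : ℝ), HasSum (fun i : ℕ × ℕ =>
      1 / ((i.1 + 1 : ℕ) : ℂ) ^ r * (1 / ((i.2 + 1 : ℕ) : ℂ) ^ s) *
        (Real.exp (-(((i.1 + 1 : ℕ) : ℝ) + ((i.2 + 1 : ℕ) : ℝ) * x) * y) : ℂ))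
      (Li s (Real.exp (-(x * y))) * Li r (Real.exp (-(1 * y)))) := by
    intro y hy
    have h₁ := hasSum_Li_exp r one_pos (mem_Ioi.mp hy)
    have h₂ := hasSum_Li_exp s hx (mem_Ioi.mp hy)
    have h₁₂ := summable_mul_of_summable_norm h₁.summable.norm h₂.summable.norm
    rw [mul_comm]
    refine (h₁.mul h₂ h₁₂).congr_fun fun i => ?_
    rw [neg_add, add_mul, Real.exp_add, Complex.ofReal_mul, mul_one]
    ring
  have h := hasSum_mellin
    (a := fun i : ℕ × ℕ => 1 / ((i.1 + 1 : ℕ) : ℂ) ^ r * (1 / ((i.2 + 1 : ℕ) : ℂ) ^ s))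
    (p := fun i : ℕ × ℕ => ((i.1 + 1 : ℕ) : ℝ) + ((i.2 + 1 : ℕ) : ℝ) * x)
    (fun i => Or.inr (by positivity)) ht hF hsum
  rw [← h.tsum_eq, h.summable.tsum_prod, Theta, ← tsum_mul_left]
  refine tsum_congr fun n => ?_
  rw [← tsum_mul_left]
  refine tsum_congr fun m => ?_
  push_cast
  rw [mul_div_assoc, ← one_div_mul_one_div, ← one_div_mul_one_div, div_eq_mul_one_div]

theorem statement1 (x : ℝ) (hx : 0 < x) (r : ℕ) (hr : 1 ≤ r) (s t : ℂ)
    (ht : max (max 0 (1 - (r : ℝ))) (max (1 - s.re) (2 - (r : ℝ) - s.re)) < t.re)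
    (M : ℕ) (hM : r - 1 ≤ M) :
    (1 / Complex.Gamma t) * ∫ y in Set.Ioi (0 : ℝ),
        (y : ℂ) ^ (t - 1) * Li s (Real.exp (-(x * y))) *
          (Li (r : ℂ) (Real.exp (-y))
            - (-1 : ℂ) ^ (r - 1) * (((harmonic (r - 1) : ℚ) : ℂ) - (Real.log y : ℂ)) *
                (y : ℂ) ^ ((r : ℂ) - 1) / (Nat.factorial (r - 1) : ℂ)
            - ∑ k ∈ Finset.range (M + 1) \ {r - 1},
                (-1) ^ k * riemannZeta ((r : ℂ) - (k : ℕ)) * (y : ℂ) ^ (k : ℕ) /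
                  (Nat.factorial k : ℂ)) =
      Theta (r : ℂ) s t x
      - ∑ k ∈ Finset.range (M + 1) \ {r - 1},
          ((-1) ^ k / (Nat.factorial k : ℂ)) * riemannZeta ((r : ℂ) - (k : ℕ)) *
            Complex.Gamma (t + (k : ℕ)) * riemannZeta (t + (k : ℕ) + s) /
            ((x : ℂ) ^ (t + (k : ℕ)) * Complex.Gamma t)
      + ((-1 : ℂ) ^ r * Complex.Gamma (t + r - 1) /
            ((x : ℂ) ^ (t + (r : ℂ) - 1) * (Nat.factorial (r - 1) : ℂ) * Complex.Gamma t)) *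
          (riemannZeta (t + s + r - 1) *
              (((harmonic (r - 1) : ℚ) : ℂ) - cdigamma (t + (r : ℂ) - 1) + (Real.log x : ℂ))
            - deriv riemannZeta (t + s + r - 1)) := by
  have ht0 : 0 < t.re :=
    (le_max_left (0 : ℝ) (1 - r)).trans (le_max_left _ _) |>.trans_lt ht
  have hts : 1 < (t + s).re := by
    have := (le_max_left (1 - s.re) (2 - (r : ℝ) - s.re)).trans (le_max_right _ _) |>.trans_lt ht
    rw [Complex.add_re]
    linarith
  have hΓ := Complex.Gamma_ne_zero_of_re_pos ht0
  have hr1 : 1 ≤ (r : ℝ) := by exact_mod_cast hr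
  have hre (k : ℕ) : 0 < (t + k).re ∧ 1 < (t + k + s).re := by
    rw [Complex.add_re] at hts
    simp only [Complex.add_re, Complex.natCast_re]
    have := (Nat.cast_nonneg k : (0 : ℝ) ≤ k)
    constructor <;> linarith
  obtain ⟨q, rfl⟩ : ∃ q, r = q + 1 := ⟨r - 1, by omega⟩
  have hA : t + ((q + 1 : ℕ) : ℂ) - 1 = t + q := by push_cast; ring
  have hAs : t + s + ((q + 1 : ℕ) : ℂ) - 1 = t + q + s := by push_cast; ring
  simp only [Nat.add_sub_cancel, hA, hAs]
  set f : ℝ → ℂ := fun y => Li s (Real.exp (-(x * y))) with hf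
  set g : ℝ → ℂ := fun y => Li ((q + 1 : ℕ) : ℂ) (Real.exp (-(1 * y))) with hg
  set c : ℂ := (-1 : ℂ) ^ q / (Nat.factorial q : ℂ) with hc
  set H : ℂ := ((harmonic q : ℚ) : ℂ)
  set d : ℕ → ℂ := fun k =>
    (-1) ^ k / (Nat.factorial k : ℂ) * riemannZeta (((q + 1 : ℕ) : ℂ) - (k : ℕ)) with hd
  have hint : ∀ y ∈ Ioi (0 : ℝ),
      (y : ℂ) ^ (t - 1) * Li s (Real.exp (-(x * y))) *
          (Li ((q + 1 : ℕ) : ℂ) (Real.exp (-y))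
            - (-1 : ℂ) ^ q * (H - (Real.log y : ℂ)) *
                (y : ℂ) ^ (((q + 1 : ℕ) : ℂ) - 1) / (Nat.factorial q : ℂ)
            - ∑ k ∈ Finset.range (M + 1) \ {q},
                (-1) ^ k * riemannZeta (((q + 1 : ℕ) : ℂ) - (k : ℕ)) * (y : ℂ) ^ (k : ℕ) /
                  (Nat.factorial k : ℂ)) =
        (y : ℂ) ^ (t - 1) • (f y * g y) - c * H * ((y : ℂ) ^ (t + q - 1) • f y)
          + c * ((y : ℂ) ^ (t + q - 1) • (Real.log y • f y))
          - ∑ k ∈ Finset.range (M + 1) \ {q}, d k * ((y : ℂ) ^ (t + k - 1) • f y) := by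
    intro y hy
    have hy0 : (y : ℂ) ≠ 0 := Complex.ofReal_ne_zero.mpr (mem_Ioi.mp hy).ne'
    have hpow (k : ℕ) : (y : ℂ) ^ (t + k - 1) = (y : ℂ) ^ (t - 1) * (y : ℂ) ^ k := by
      rw [← Complex.cpow_natCast, ← Complex.cpow_add _ _ hy0]
      congr 1
      ring
    have hq : (y : ℂ) ^ (((q + 1 : ℕ) : ℂ) - 1) = (y : ℂ) ^ q := by
      rw [← Complex.cpow_natCast]
      congr 1
      push_cast
      ring
    simp only [hpow, hq, hf, hg, hc, hd, one_mul, smul_eq_mul, Complex.real_smul]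
    rw [mul_sub _ _ (∑ k ∈ _, _), Finset.mul_sum]
    congr 1
    · ring
    · exact Finset.sum_congr rfl fun k _ => by ring
  have hfg := mellinConvergent_Li_exp_mul_Li_exp ((q + 1 : ℕ) : ℂ) s hx
    (by rwa [Complex.natCast_re]) ht0 hts
  have hfk (k : ℕ) := mellinConvergent_Li_exp s hx (hre k).1 (hre k).2
  rw [setIntegral_congr_fun measurableSet_Ioi hint, integral_sub, integral_add, integral_sub,
    integral_finsetSum, integral_const_mul, integral_const_mul]
  rotate_left
  · exact fun k _ => (hfk k).1.const_mul _
  · exact hfg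
  · exact (hfk q).1.const_mul _
  · exact hfg.sub ((hfk q).1.const_mul _)
  · exact (hfk q).2.1.const_mul _
  · exact (hfg.sub ((hfk q).1.const_mul _)).add ((hfk q).2.1.const_mul _)
  · exact integrable_finsetSum _ fun k _ => (hfk k).1.const_mul _
  simp only [integral_const_mul]
  have e₁ := mellin_Li_exp_mul_Li_exp ((q + 1 : ℕ) : ℂ) s hx
    (by rwa [Complex.natCast_re]) ht0 hts
  have e₂ (k : ℕ) := mellin_Li_exp s hx (hre k).1 (hre k).2
  have e₃ := mellin_log_smul_Li_exp s hx (hre q).1 (hre q).2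
  simp only [mellin] at e₁ e₂ e₃
  simp only [hf, hg, e₁, e₂, e₃]
  have hx' : (x : ℂ) ^ (t + q) ≠ 0 := by
    simp [Complex.cpow_eq_zero_iff, hx.ne']
  have hsum : (1 / Complex.Gamma t) * ∑ k ∈ Finset.range (M + 1) \ {q},
      d k * (Complex.Gamma (t + k) * riemannZeta (t + k + s) / (x : ℂ) ^ (t + (k : ℂ))) =
      ∑ k ∈ Finset.range (M + 1) \ {q},
        d k * Complex.Gamma (t + k) * riemannZeta (t + k + s) /
          ((x : ℂ) ^ (t + (k : ℂ)) * Complex.Gamma t) := by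
    rw [Finset.mul_sum]
    refine Finset.sum_congr rfl fun k _ => ?_
    rw [mul_comm ((x : ℂ) ^ (t + (k : ℂ)))]
    field_simp
  rw [mul_sub, hsum, hc, pow_succ]
  generalize (∑ k ∈ Finset.range (M + 1) \ {q}, _ : ℂ) = S
  have hfac : (Nat.factorial q : ℂ) ≠ 0 := Nat.cast_ne_zero.mpr q.factorial_ne_zero
  field_simp
  ring
end

section
/- Let r, t ∈ ℕ (r, t ≥ 1). For x>0 define F(x) := (−1)^r ∑_{j=0}^{t−2} C(j+r−1, j) ( (−1)^{t−j} / (t−j−1)! ) (1/x^{j+r}) ∑_{m=1}^∞ ψ^{(t−j−1)}(mx+1)/m^{2r+j} + ∑_{i=0}^{r−2} ((−1)^i / x^{t+i}) C(i+t−1, i) ζ(r+t+i) ζ(r−i) − ((−1)^r / x^{r+t−1}) C(r+t−2, t−1) ∑_{m=1}^∞ ( γ + ψ(mx+1) )/m^{2r+t−1}. Then the mixed functional equation F(x) = x^{−t} F(1/x) holds for all x>0. -/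
open Complex

/-- Binomial coefficient `C(a,b)` for integer arguments, with the conventions
`C(-1,0) = 1`, `C(c,-1) = 0` for `c ≠ -1`, and `C(-1,-1) = 1`. -/
def binomC (a b : ℤ) : ℤ :=
  if a = -1 ∧ (b = 0 ∨ b = -1) then 1
  else if b < 0 ∨ a < 0 then 0
  else (a.toNat.choose b.toNat : ℤ)

/-- The digamma function `ψ(y) = -γ + ∑_{n=0}^∞ (1/(n+1) - 1/(n+y))` (for `y > 0`),
so that `γ + ψ(y+1) = ∑_{n=1}^∞ (1/n - 1/(n+y))`. -/
noncomputable def psi (y : ℝ) : ℝ :=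
  -Real.eulerMascheroniConstant + ∑' n : ℕ, (1 / ((n : ℝ) + 1) - 1 / ((n : ℝ) + y))

/-- The `k`-th polygamma function `ψ^{(k)}(y) = (-1)^{k+1} k! ∑_{n=0}^∞ (n+y)^{-(k+1)}`
(for `k ≥ 1` and `y > 0`), so that `ψ^{(k)}(y+1) = (-1)^{k+1} k! ∑_{n=1}^∞ (n+y)^{-(k+1)}`. -/
noncomputable def polygamma (k : ℕ) (y : ℝ) : ℝ :=
  (-1 : ℝ) ^ (k + 1) * (Nat.factorial k) * ∑' n : ℕ, ((n : ℝ) + y) ^ (-((k : ℤ) + 1))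

/-- The function `𝓕(x)` of the mixed functional equation (Theorem `MIXEDthm`). -/
noncomputable def Fmix (r t : ℕ) (x : ℝ) : ℂ :=
  (-1 : ℂ) ^ r * ∑ j ∈ Finset.range (t - 1),
      ((binomC ((j : ℤ) + r - 1) j : ℤ) : ℂ) *
        ((-1 : ℂ) ^ (t - j) / ((t - j - 1).factorial : ℂ)) * (1 / (x : ℂ) ^ (j + r)) *
        ∑' m : ℕ, ((polygamma (t - j - 1) (((m : ℝ) + 1) * x + 1) : ℝ) : ℂ) /
          ((m + 1 : ℕ) : ℂ) ^ (2 * r + j)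
  + ∑ i ∈ Finset.range (r - 1),
      ((-1 : ℂ) ^ i / (x : ℂ) ^ (t + i)) * ((binomC ((i : ℤ) + t - 1) i : ℤ) : ℂ) *
        riemannZeta ((r : ℂ) + (t : ℂ) + (i : ℂ)) * riemannZeta ((r : ℂ) - (i : ℂ))
  - ((-1 : ℂ) ^ r / (x : ℂ) ^ (r + t - 1)) *
      ((binomC ((r : ℤ) + t - 2) ((t : ℤ) - 1) : ℤ) : ℂ) *
      ∑' m : ℕ, ((Real.eulerMascheroniConstant + psi (((m : ℝ) + 1) * x + 1) : ℝ) : ℂ) /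
        ((m + 1 : ℕ) : ℂ) ^ (2 * r + t - 1)

open Finset in
/-- The principal part at `a = 0` of the partial fraction expansion of `1 / (a ^ r * (a + y) ^ t)`. -/
noncomputable def principalPart (r t : ℕ) (a y : ℝ) : ℝ :=
  ∑ i ∈ range r, (-1) ^ i * ((t + i - 1).choose i : ℝ) * (y ^ (t + i))⁻¹ * (a ^ (r - i))⁻¹

open Finset in
lemma mul_principalPart_succ_succ (r t : ℕ) (a y : ℝ) (hy : y ≠ 0) :
    y * principalPart (r + 1) (t + 1) a y
      = principalPart (r + 1) t a y - principalPart r (t + 1) a y := by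
  unfold principalPart
  rw [sum_range_succ' _ r, sum_range_succ' _ r, mul_add, mul_sum, add_sub_right_comm,
    ← sum_sub_distrib]
  congr 1
  · refine sum_congr rfl fun i _ => ?_
    have e1 : t + 1 + (i + 1) - 1 = t + i + 1 := by omega
    have e2 : t + (i + 1) - 1 = t + i := by omega
    have e3 : t + 1 + i - 1 = t + i := by omega
    have e4 : r + 1 - (i + 1) = r - i := by omega
    have e5 : (y ^ (t + i + 1))⁻¹ = y * (y ^ (t + i + 2))⁻¹ := by
      field_simp
      ring
    rw [e1, e2, e3, e4, Nat.choose_succ_succ, show t + 1 + (i + 1) = t + i + 2 by ring,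
      show t + (i + 1) = t + i + 1 by ring, show t + 1 + i = t + i + 1 by ring, e5]
    push_cast
    ring
  · simp
    field_simp
    ring

lemma principalPart_zero_right (r : ℕ) (a y : ℝ) :
    principalPart (r + 1) 0 a y = (a ^ (r + 1))⁻¹ := by
  unfold principalPart
  rw [Finset.sum_range_succ', Finset.sum_eq_zero]
  · simp
  · intro i _
    rw [Nat.choose_eq_zero_of_lt (by omega)]
    simp

/-- Partial fraction expansion of `1 / (a ^ r * (a + y) ^ t)`. -/
lemma inv_pow_mul_pow_eq_principalPart (a y : ℝ) (ha : a ≠ 0) (hy : y ≠ 0) (hb : a + y ≠ 0)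
    (r t : ℕ) (hrt : r + t ≠ 0) :
    (a ^ r * (a + y) ^ t)⁻¹ = principalPart r t a y + principalPart t r (a + y) (-y) := by
  induction r generalizing t with
  | zero =>
    obtain ⟨t, rfl⟩ : ∃ s, t = s + 1 := ⟨t - 1, by omega⟩
    rw [principalPart_zero_right]
    simp [principalPart]
  | succ r ihr =>
    induction t with
    | zero =>
      rw [principalPart_zero_right]
      simp [principalPart]
    | succ t iht =>
      have h1 := mul_principalPart_succ_succ r t a y hy
      have h2 := mul_principalPart_succ_succ t r (a + y) (-y) (neg_ne_zero.mpr hy)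
      have h3 := ihr (t + 1) (by omega)
      have h4 := iht (by omega)
      have h5 : y * (a ^ (r + 1) * (a + y) ^ (t + 1))⁻¹
          = (a ^ (r + 1) * (a + y) ^ t)⁻¹ - (a ^ r * (a + y) ^ (t + 1))⁻¹ := by
        field_simp
        ring
      apply mul_left_cancel₀ hy
      rw [h5, h3, h4]
      linarith

/-- Partial fraction expansion with the two simple poles grouped together. -/
lemma inv_pow_succ_mul_pow_succ (a y : ℝ) (ha : a ≠ 0) (hy : y ≠ 0) (hb : a + y ≠ 0) (R T : ℕ) :
    (a ^ (R + 1) * (a + y) ^ (T + 1))⁻¹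
      = ∑ i ∈ Finset.range R, (-1) ^ i * ((T + i).choose i : ℝ) * (y ^ (T + 1 + i))⁻¹ *
          (a ^ (R + 1 - i))⁻¹
        + ∑ j ∈ Finset.range T, (-1) ^ (R + 1) * ((R + j).choose j : ℝ) * (y ^ (R + 1 + j))⁻¹ *
          ((a + y) ^ (T + 1 - j))⁻¹
        - (-1) ^ (R + 1) * ((R + T).choose T : ℝ) * (y ^ (R + T + 1))⁻¹ * (1 / a - 1 / (a + y)) := by
  rw [inv_pow_mul_pow_eq_principalPart a y ha hy hb _ _ (by omega)]
  unfold principalPart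
  rw [Finset.sum_range_succ, Finset.sum_range_succ]
  have hsign : ∀ k j : ℕ, (-1 : ℝ) ^ j * ((-y) ^ (k + j))⁻¹ = (-1) ^ k * (y ^ (k + j))⁻¹ := by
    intro k j
    rw [neg_pow y, mul_inv, ← inv_pow, pow_add, show (-1 : ℝ)⁻¹ = -1 by norm_num]
    have : (-1 : ℝ) ^ j * (-1) ^ j = 1 := by rw [← mul_pow]; simp
    linear_combination (-1 : ℝ) ^ k * (y ^ (k + j))⁻¹ * this
  have h1 : ∀ i, T + 1 + i - 1 = T + i := by intro i; omega
  have h2 : ∀ i, R + 1 + i - 1 = R + i := by intro i; omega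
  have h3 : (T + R).choose R = (R + T).choose T := by
    rw [add_comm, Nat.choose_symm_add]
  have h4 : ∀ j, (-1 : ℝ) ^ j * ((R + j).choose j : ℝ) * ((-y) ^ (R + 1 + j))⁻¹
      = (-1) ^ (R + 1) * ((R + j).choose j : ℝ) * (y ^ (R + 1 + j))⁻¹ := by
    intro j
    linear_combination ((R + j).choose j : ℝ) * hsign (R + 1) j
  simp only [h1, h2, h3, h4]
  rw [show R + 1 - R = 1 by omega, show T + 1 - T = 1 by omega,
    show T + 1 + R = R + T + 1 by ring, show R + 1 + T = R + T + 1 by ring]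
  ring

/-- The zeta value at `k`, as a real series. -/
noncomputable def realZeta (k : ℕ) : ℝ := ∑' n : ℕ, (((n : ℝ) + 1) ^ k)⁻¹

/-- The Hurwitz zeta value at `k` with parameter `y + 1`, as a real series. -/
noncomputable def realHurwitz (k : ℕ) (y : ℝ) : ℝ := ∑' n : ℕ, (((n : ℝ) + 1 + y) ^ k)⁻¹

/-- The series for `γ + ψ (y + 1)`. -/
noncomputable def digammaSeries (y : ℝ) : ℝ := ∑' n : ℕ, (1 / ((n : ℝ) + 1) - 1 / ((n : ℝ) + 1 + y))

lemma summable_inv_succ_pow (k : ℕ) (hk : 2 ≤ k) :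
    Summable fun n : ℕ => (((n : ℝ) + 1) ^ k)⁻¹ := by
  have h := (summable_nat_add_iff 1).mpr (Real.summable_nat_pow_inv (p := k).mpr (by omega))
  simpa using h

lemma inv_add_pow_le (n k : ℕ) (y : ℝ) (hy : 0 < y) :
    (((n : ℝ) + 1 + y) ^ k)⁻¹ ≤ (((n : ℝ) + 1) ^ k)⁻¹ := by
  exact inv_anti₀ (by positivity) (pow_le_pow_left₀ (by positivity) (by linarith) k)

lemma summable_inv_succ_add_pow (k : ℕ) (hk : 2 ≤ k) (y : ℝ) (hy : 0 < y) :
    Summable fun n : ℕ => (((n : ℝ) + 1 + y) ^ k)⁻¹ :=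
  (summable_inv_succ_pow k hk).of_nonneg_of_le (fun n => by positivity)
    fun n => inv_add_pow_le n k y hy

lemma realHurwitz_nonneg (k : ℕ) (y : ℝ) (hy : 0 < y) : 0 ≤ realHurwitz k y :=
  tsum_nonneg fun n => by positivity

lemma realHurwitz_le (k : ℕ) (hk : 2 ≤ k) (y : ℝ) (hy : 0 < y) : realHurwitz k y ≤ realZeta k :=
  (summable_inv_succ_add_pow k hk y hy).tsum_le_tsum (fun n => inv_add_pow_le n k y hy)
    (summable_inv_succ_pow k hk)

lemma summable_digammaSeries (y : ℝ) (hy : 0 < y) :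
    Summable fun n : ℕ => (1 / ((n : ℝ) + 1) - 1 / ((n : ℝ) + 1 + y)) := by
  refine ((summable_inv_succ_pow 2 le_rfl).mul_left y).of_nonneg_of_le (fun n => ?_) fun n => ?_
  · rw [sub_nonneg]
    exact one_div_le_one_div_of_le (by positivity) (by linarith)
  · have h : 1 / ((n : ℝ) + 1) - 1 / ((n : ℝ) + 1 + y)
        = y * (((n : ℝ) + 1) * ((n : ℝ) + 1 + y))⁻¹ := by
      field_simp
      ring
    rw [h, pow_two]
    refine mul_le_mul_of_nonneg_left (inv_anti₀ (by positivity) ?_) hy.le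
    exact mul_le_mul_of_nonneg_left (by linarith) (by positivity)

lemma tsum_inv_pow_succ_mul_pow_succ (R T : ℕ) (y : ℝ) (hy : 0 < y) :
    ∑' n : ℕ, (((n : ℝ) + 1) ^ (R + 1) * ((n : ℝ) + 1 + y) ^ (T + 1))⁻¹
      = ∑ i ∈ Finset.range R, (-1) ^ i * ((T + i).choose i : ℝ) * (y ^ (T + 1 + i))⁻¹ *
          realZeta (R + 1 - i)
        + ∑ j ∈ Finset.range T, (-1) ^ (R + 1) * ((R + j).choose j : ℝ) * (y ^ (R + 1 + j))⁻¹ *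
          realHurwitz (T + 1 - j) y
        - (-1) ^ (R + 1) * ((R + T).choose T : ℝ) * (y ^ (R + T + 1))⁻¹ * digammaSeries y := by
  simp_rw [fun n : ℕ => inv_pow_succ_mul_pow_succ ((n : ℝ) + 1) y (by positivity) hy.ne'
    (by positivity) R T]
  refine HasSum.tsum_eq (((hasSum_sum fun i hi => ?_).add (hasSum_sum fun j hj => ?_)).sub ?_)
  · rw [Finset.mem_range] at hi
    exact (summable_inv_succ_pow _ (by omega)).hasSum.mul_left _
  · rw [Finset.mem_range] at hj
    exact (summable_inv_succ_add_pow _ (by omega) y hy).hasSum.mul_left _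
  · exact (summable_digammaSeries y hy).hasSum.mul_left _

/-- The summand of the Mordell–Tornheim type double series. -/
noncomputable def tornheimTerm (r t : ℕ) (x : ℝ) (p : ℕ × ℕ) : ℝ :=
  (((p.1 : ℝ) + 1) ^ r * (((p.2 : ℝ) + 1) ^ r * ((p.2 : ℝ) + 1 + ((p.1 : ℝ) + 1) * x) ^ t))⁻¹

lemma tornheimTerm_swap (r t : ℕ) (x : ℝ) (hx : 0 < x) (p : ℕ × ℕ) :
    tornheimTerm r t x p = (x ^ t)⁻¹ * tornheimTerm r t (1 / x) p.swap := by
  unfold tornheimTerm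
  have h : (p.2 : ℝ) + 1 + ((p.1 : ℝ) + 1) * x
      = x * ((p.1 : ℝ) + 1 + ((p.2 : ℝ) + 1) * (1 / x)) := by
    field_simp
    ring
  rw [h, mul_pow, ← mul_inv]
  simp only [Prod.fst_swap, Prod.snd_swap]
  congr 1
  ring

lemma summable_tornheimTerm (R T : ℕ) (x : ℝ) (hx : 0 < x) :
    Summable (tornheimTerm (R + 1) (T + 1) x) := by
  have h32 : Summable fun n : ℕ => (((n : ℝ) + 1) * √((n : ℝ) + 1))⁻¹ := by
    have h := (summable_nat_add_iff 1).mpr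
      (Real.summable_nat_rpow_inv (p := 3 / 2).mpr (by norm_num))
    refine h.congr fun n => ?_
    rw [show (3 / 2 : ℝ) = 1 + 1 / 2 by norm_num, Real.rpow_add (by positivity),
      Real.rpow_one, Real.sqrt_eq_rpow]
    push_cast
    rfl
  have hprod := (h32.mul_of_nonneg h32 (fun n => by positivity) (fun n => by positivity)).mul_left
    (√x)⁻¹
  refine hprod.of_nonneg_of_le (fun p => by unfold tornheimTerm; positivity) fun p => ?_
  unfold tornheimTerm
  rw [← mul_inv, ← mul_inv]
  set a : ℝ := (p.1 : ℝ) + 1 with ha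
  set b : ℝ := (p.2 : ℝ) + 1 with hb
  have ha1 : 1 ≤ a := by simp [ha]
  have hb1 : 1 ≤ b := by simp [hb]
  have hpos : 0 < √x * (a * √a * (b * √b)) := by positivity
  refine inv_anti₀ hpos ?_
  have e1 : a ≤ a ^ (R + 1) := le_self_pow₀ ha1 (by omega)
  have e2 : b ≤ b ^ (R + 1) := le_self_pow₀ hb1 (by omega)
  have hax : 0 < a * x := by positivity
  have e3 : b + a * x ≤ (b + a * x) ^ (T + 1) := le_self_pow₀ (by linarith) (by omega)
  have e4 : √x * √a * √b ≤ b + a * x := by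
    have s1 : √(a * x) = √x * √a := by rw [mul_comm, Real.sqrt_mul hx.le]
    rw [← s1]
    nlinarith [sq_nonneg (√(a * x) - √b), Real.sq_sqrt hax.le,
      Real.sq_sqrt (show 0 ≤ b by linarith), Real.sqrt_nonneg (a * x), Real.sqrt_nonneg b]
  calc √x * (a * √a * (b * √b)) = a * (b * (√x * √a * √b)) := by ring
    _ ≤ a ^ (R + 1) * (b ^ (R + 1) * (b + a * x) ^ (T + 1)) := by
      gcongr
      exact e4.trans e3

/-- Summing the partial fraction expansion of the double series over the second variable. -/
lemma tsum_tornheimTerm (R T : ℕ) (x : ℝ) (hx : 0 < x) :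
    ∑' p, tornheimTerm (R + 1) (T + 1) x p
      = ∑ i ∈ Finset.range R, (-1) ^ i * ((T + i).choose i : ℝ) * (x ^ (T + 1 + i))⁻¹ *
          realZeta (R + 1 + (T + 1) + i) * realZeta (R + 1 - i)
        + ∑ j ∈ Finset.range T, (-1) ^ (R + 1) * ((R + j).choose j : ℝ) * (x ^ (R + 1 + j))⁻¹ *
          ∑' m : ℕ, (((m : ℝ) + 1) ^ (2 * (R + 1) + j))⁻¹ *
            realHurwitz (T + 1 - j) (((m : ℝ) + 1) * x)
        - (-1) ^ (R + 1) * ((R + T).choose T : ℝ) * (x ^ (R + T + 1))⁻¹ *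
          ∑' m : ℕ, (((m : ℝ) + 1) ^ (2 * (R + 1) + T))⁻¹ * digammaSeries (((m : ℝ) + 1) * x) := by
  have hs := summable_tornheimTerm R T x hx
  have hA := hs.prod.hasSum
  rw [← hs.tsum_prod] at hA
  have hZ : HasSum (fun m : ℕ => ∑ i ∈ Finset.range R,
      (-1) ^ i * ((T + i).choose i : ℝ) * (x ^ (T + 1 + i))⁻¹ *
        (((m : ℝ) + 1) ^ (R + 1 + (T + 1) + i))⁻¹ * realZeta (R + 1 - i))
      (∑ i ∈ Finset.range R, (-1) ^ i * ((T + i).choose i : ℝ) * (x ^ (T + 1 + i))⁻¹ *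
          realZeta (R + 1 + (T + 1) + i) * realZeta (R + 1 - i)) :=
    hasSum_sum fun i _ =>
      ((summable_inv_succ_pow _ (by omega)).hasSum.mul_left _).mul_right _
  have hP : HasSum (fun m : ℕ => ∑ j ∈ Finset.range T,
      (-1) ^ (R + 1) * ((R + j).choose j : ℝ) * (x ^ (R + 1 + j))⁻¹ *
        ((((m : ℝ) + 1) ^ (2 * (R + 1) + j))⁻¹ * realHurwitz (T + 1 - j) (((m : ℝ) + 1) * x)))
      (∑ j ∈ Finset.range T, (-1) ^ (R + 1) * ((R + j).choose j : ℝ) * (x ^ (R + 1 + j))⁻¹ *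
          ∑' m : ℕ, (((m : ℝ) + 1) ^ (2 * (R + 1) + j))⁻¹ *
            realHurwitz (T + 1 - j) (((m : ℝ) + 1) * x)) := by
    refine hasSum_sum fun j hj => HasSum.mul_left _ (Summable.hasSum ?_)
    rw [Finset.mem_range] at hj
    refine ((summable_inv_succ_pow (2 * (R + 1) + j) (by omega)).mul_right
      (realZeta (T + 1 - j))).of_nonneg_of_le (fun m => ?_) fun m => ?_
    · have := realHurwitz_nonneg (T + 1 - j) (((m : ℝ) + 1) * x) (by positivity)
      positivity
    · gcongr
      exact realHurwitz_le _ (by omega) _ (by positivity)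
  have hL := (hZ.add hP).sub hA
  have key := hL.tsum_eq
  rw [← tsum_mul_left]
  rw [eq_sub_iff_add_eq', ← eq_sub_iff_add_eq, ← key]
  refine tsum_congr fun m => ?_
  have hin : ∑' n : ℕ, tornheimTerm (R + 1) (T + 1) x (m, n) = (((m : ℝ) + 1) ^ (R + 1))⁻¹ *
      ∑' n : ℕ, (((n : ℝ) + 1) ^ (R + 1) * ((n : ℝ) + 1 + ((m : ℝ) + 1) * x) ^ (T + 1))⁻¹ := by
    rw [← tsum_mul_left]
    refine tsum_congr fun n => ?_
    simp only [tornheimTerm, mul_inv]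
  have hpow : ∀ k l : ℕ, ((m : ℝ) + 1) ^ (k + l) = ((m : ℝ) + 1) ^ k * ((m : ℝ) + 1) ^ l :=
    pow_add _
  have hZm : ∑ i ∈ Finset.range R, (-1) ^ i * ((T + i).choose i : ℝ) * (x ^ (T + 1 + i))⁻¹ *
        (((m : ℝ) + 1) ^ (R + 1 + (T + 1) + i))⁻¹ * realZeta (R + 1 - i)
      = (((m : ℝ) + 1) ^ (R + 1))⁻¹ * ∑ i ∈ Finset.range R, (-1) ^ i * ((T + i).choose i : ℝ) *
        ((((m : ℝ) + 1) * x) ^ (T + 1 + i))⁻¹ * realZeta (R + 1 - i) := by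
    rw [Finset.mul_sum]
    refine Finset.sum_congr rfl fun i _ => ?_
    rw [add_assoc (R + 1), hpow (R + 1), mul_pow, mul_inv, mul_inv]
    ring
  have hPm : ∑ j ∈ Finset.range T, (-1) ^ (R + 1) * ((R + j).choose j : ℝ) *
        (x ^ (R + 1 + j))⁻¹ * ((((m : ℝ) + 1) ^ (2 * (R + 1) + j))⁻¹ *
          realHurwitz (T + 1 - j) (((m : ℝ) + 1) * x))
      = (((m : ℝ) + 1) ^ (R + 1))⁻¹ * ∑ j ∈ Finset.range T, (-1) ^ (R + 1) *
        ((R + j).choose j : ℝ) * ((((m : ℝ) + 1) * x) ^ (R + 1 + j))⁻¹ *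
          realHurwitz (T + 1 - j) (((m : ℝ) + 1) * x) := by
    rw [Finset.mul_sum]
    refine Finset.sum_congr rfl fun j _ => ?_
    rw [two_mul, add_assoc (R + 1), hpow (R + 1), mul_pow, mul_inv, mul_inv]
    ring
  rw [hin, tsum_inv_pow_succ_mul_pow_succ R T _ (by positivity), hZm, hPm,
    show 2 * (R + 1) + T = R + 1 + (R + T + 1) by ring, hpow (R + 1), mul_pow _ x (R + T + 1),
    mul_inv, mul_inv]
  ring

lemma riemannZeta_natCast_eq_realZeta (k : ℕ) (hk : 2 ≤ k) :
    riemannZeta (k : ℂ) = (realZeta k : ℂ) := by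
  rw [zeta_eq_tsum_one_div_nat_add_one_cpow (by simp; omega), realZeta, Complex.ofReal_tsum]
  refine tsum_congr fun n => ?_
  simp

lemma polygamma_succ (k : ℕ) (y : ℝ) :
    polygamma k (y + 1) = (-1) ^ (k + 1) * (k.factorial : ℝ) * realHurwitz (k + 1) y := by
  unfold polygamma realHurwitz
  congr 1
  refine tsum_congr fun n => ?_
  rw [zpow_neg, add_right_comm, add_assoc]
  norm_cast

lemma eulerMascheroni_add_psi_succ (y : ℝ) :
    Real.eulerMascheroniConstant + psi (y + 1) = digammaSeries y := by
  unfold psi digammaSeries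
  rw [add_neg_cancel_left]
  refine tsum_congr fun n => ?_
  rw [add_right_comm (n : ℝ), add_assoc]

lemma binomC_natCast (a b : ℕ) : binomC (a : ℤ) (b : ℤ) = (a.choose b : ℤ) := by
  unfold binomC
  rw [if_neg (by omega), if_neg (by omega)]
  simp

lemma Fmix_eq_tsum (R T : ℕ) (x : ℝ) (hx : 0 < x) :
    Fmix (R + 1) (T + 1) x = ((∑' p, tornheimTerm (R + 1) (T + 1) x p : ℝ) : ℂ) := by
  have b1 : ∀ j : ℕ, binomC ((j : ℤ) + (R + 1 : ℕ) - 1) j = ((R + j).choose j : ℕ) := fun j => by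
    rw [← binomC_natCast]
    congr 1
    push_cast
    ring
  have b2 : ∀ i : ℕ, binomC ((i : ℤ) + (T + 1 : ℕ) - 1) i = ((T + i).choose i : ℕ) := fun i => by
    rw [← binomC_natCast]
    congr 1
    push_cast
    ring
  have b3 : binomC (((R + 1 : ℕ) : ℤ) + (T + 1 : ℕ) - 2) (((T + 1 : ℕ) : ℤ) - 1)
      = ((R + T).choose T : ℕ) := by
    rw [← binomC_natCast]
    congr 1 <;> push_cast <;> ring
  rw [tsum_tornheimTerm R T x hx, add_comm (∑ i ∈ Finset.range R, _) (∑ j ∈ Finset.range T, _),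
    Complex.ofReal_sub, Complex.ofReal_add, Complex.ofReal_sum, Complex.ofReal_sum]
  unfold Fmix
  rw [Finset.mul_sum, b3, Nat.add_sub_cancel, Nat.add_sub_cancel]
  congr 1
  · congr 1
    · refine Finset.sum_congr rfl fun j hj => ?_
      rw [Finset.mem_range] at hj
      obtain ⟨k, hk⟩ : ∃ k, T + 1 - j = k + 1 := ⟨T - j, by omega⟩
      have hfac : (k.factorial : ℂ) ≠ 0 := by exact_mod_cast k.factorial_ne_zero
      have hsq : (-1 : ℂ) ^ (k + 1) * (-1) ^ (k + 1) = 1 := by rw [← mul_pow]; simp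
      have hsum : ∑' m : ℕ, ((polygamma k (((m : ℝ) + 1) * x + 1) : ℝ) : ℂ) /
            ((m + 1 : ℕ) : ℂ) ^ (2 * (R + 1) + j)
          = (-1) ^ (k + 1) * (k.factorial : ℂ) * ((∑' m : ℕ, (((m : ℝ) + 1) ^ (2 * (R + 1) + j))⁻¹ *
            realHurwitz (k + 1) (((m : ℝ) + 1) * x) : ℝ) : ℂ) := by
        rw [Complex.ofReal_tsum, ← tsum_mul_left]
        refine tsum_congr fun m => ?_
        rw [polygamma_succ]
        push_cast
        ring
      rw [hk, Nat.add_sub_cancel, hsum, b1, add_comm j (R + 1), Complex.ofReal_mul]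
      generalize (∑' m : ℕ, (((m : ℝ) + 1) ^ (2 * (R + 1) + j))⁻¹ *
            realHurwitz (k + 1) (((m : ℝ) + 1) * x)) = S
      have hcancel : (-1 : ℂ) ^ (k + 1) / (k.factorial : ℂ) * ((-1) ^ (k + 1) * (k.factorial : ℂ))
          = 1 := by
        rw [div_mul_eq_mul_div, ← mul_assoc, hsq, one_mul, div_self hfac]
      push_cast
      linear_combination (-1) ^ (R + 1) * ((R + j).choose j : ℂ) * ((x : ℂ) ^ (R + 1 + j))⁻¹ *
        (S : ℂ) * hcancel
    · refine Finset.sum_congr rfl fun i hi => ?_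
      rw [Finset.mem_range] at hi
      have z1 : ((R + 1 : ℕ) : ℂ) + ((T + 1 : ℕ) : ℂ) + (i : ℂ) = (R + 1 + (T + 1) + i : ℕ) := by
        push_cast
        rfl
      have z2 : ((R + 1 : ℕ) : ℂ) - (i : ℂ) = (R + 1 - i : ℕ) := by
        rw [Nat.cast_sub (by omega)]
      rw [z1, z2, riemannZeta_natCast_eq_realZeta _ (by omega),
        riemannZeta_natCast_eq_realZeta _ (by omega), b2]
      push_cast
      ring
  · have hsum : ∑' m : ℕ,
          ((Real.eulerMascheroniConstant + psi (((m : ℝ) + 1) * x + 1) : ℝ) : ℂ) /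
            ((m + 1 : ℕ) : ℂ) ^ (2 * (R + 1) + T)
        = ((∑' m : ℕ, (((m : ℝ) + 1) ^ (2 * (R + 1) + T))⁻¹ *
            digammaSeries (((m : ℝ) + 1) * x) : ℝ) : ℂ) := by
      rw [Complex.ofReal_tsum]
      refine tsum_congr fun m => ?_
      rw [eulerMascheroni_add_psi_succ]
      push_cast
      ring
    rw [show 2 * (R + 1) + (T + 1) - 1 = 2 * (R + 1) + T by omega,
      show R + 1 + (T + 1) - 1 = R + T + 1 by omega, hsum, Complex.ofReal_mul]
    push_cast
    ring

theorem statement13 (r t : ℕ) (hr : 1 ≤ r) (ht : 1 ≤ t) (x : ℝ) (hx : 0 < x) :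
    Fmix r t x = ((x : ℂ)) ^ (-(t : ℤ)) * Fmix r t (1 / x) := by
  obtain ⟨R, rfl⟩ : ∃ s, r = s + 1 := ⟨r - 1, by omega⟩
  obtain ⟨T, rfl⟩ : ∃ s, t = s + 1 := ⟨t - 1, by omega⟩
  rw [Fmix_eq_tsum R T x hx, Fmix_eq_tsum R T (1 / x) (by positivity), zpow_neg, zpow_natCast,
    tsum_congr (tornheimTerm_swap (R + 1) (T + 1) x hx), tsum_mul_left]
  have hswap := (Equiv.prodComm ℕ ℕ).tsum_eq (tornheimTerm (R + 1) (T + 1) (1 / x))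
  simp only [Equiv.prodComm_apply] at hswap
  rw [hswap, Complex.ofReal_mul, Complex.ofReal_inv, Complex.ofReal_pow]
end
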